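/- Logarithmic Sobolev inequality for the Gaussian measure: for every smooth, strictly positive function f on ℝⁿ (with suitable integrability), Ent_γ(f) := ∫ f log(f / ∫f dγ) dγ ≤ (1/2) ∫ |∇f|²/f dγ. -/

import Mathlib

open MeasureTheory Real

noncomputable def gaussian (n : ℕ) : Measure (EuclideanSpace ℝ (Fin n)) :=
  (volume : Measure (EuclideanSpace ℝ (Fin n))).withDensity
    (fun x => ENNReal.ofReal ((2 * Real.pi) ^ (-(n : ℝ) / 2) * Real.exp (-‖x‖ ^ 2 / 2)))

noncomputable def OU (n : ℕ) (t : ℝ) (f : EuclideanSpace ℝ (Fin n) → ℝ)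
    (x : EuclideanSpace ℝ (Fin n)) : ℝ :=
  ∫ y, f (Real.exp (-t) • x + Real.sqrt (1 - Real.exp (-2 * t)) • y) ∂(gaussian n)

/-!
On the line, let `T` be the increasing map transporting `f φ` to `m φ`, where `φ` is the Gaussian
density and `m = ∫ f dγ`. Taking logarithms in `f φ = m φ(T) T'`, using `log T' ≤ T' - 1` and
completing the square bounds the integrand `(f log (f / m) - f' ^ 2 / (2 f)) φ` by the derivative of
`f φ (T - x)`. The boundary terms need no decay assumption on `f`: `-f φ T` is the derivative of
the nonnegative function `m φ(T)`, so it cannot stay away from `0` with the wrong sign near `±∞`.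

Subadditivity of entropy over product measures reduces `ℝⁿ` to the line, one partial derivative per
coordinate.
-/

open ProbabilityTheory Filter Topology

theorem integral_pos_of_ae_pos {X : Type*} [MeasurableSpace X] {μ : Measure X} [NeZero μ]
    {f : X → ℝ} (hf : Integrable f μ) (hpos : ∀ᵐ x ∂μ, 0 < f x) : 0 < ∫ x, f x ∂μ := by
  refine (integral_nonneg_of_ae (hpos.mono fun _ => le_of_lt)).lt_of_ne' fun hzero => ?_
  have hae := (integral_eq_zero_iff_of_nonneg_ae (hpos.mono fun _ => le_of_lt) hf).1 hzero
  obtain ⟨x, hx0, hx⟩ := (hae.and hpos).exists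
  exact hx.ne' hx0

theorem integral_comp_measurePreserving {X Y E : Type*} [MeasurableSpace X] [MeasurableSpace Y]
    [NormedAddCommGroup E] [NormedSpace ℝ E] {μ : Measure X} {ν : Measure Y} {Φ : Y → X}
    (hΦ : MeasurePreserving Φ ν μ) {f : X → E} (hf : Integrable f μ) :
    ∫ y, f (Φ y) ∂ν = ∫ x, f x ∂μ := by
  have hae : AEStronglyMeasurable f (ν.map Φ) := hΦ.map_eq ▸ hf.aestronglyMeasurable
  rw [← integral_map hΦ.measurable.aemeasurable hae, hΦ.map_eq]

section Transport

variable {p q : ℝ → ℝ}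

theorem hasDerivAt_integral_Iic (hpc : Continuous p) (hp : Integrable p) (x : ℝ) :
    HasDerivAt (fun x => ∫ t in Set.Iic x, p t) (p x) x := by
  have hsplit : (fun x => ∫ t in Set.Iic x, p t)
      = fun x => (∫ t in (0 : ℝ)..x, p t) + ∫ t in Set.Iic 0, p t := by
    ext x
    rw [← intervalIntegral.integral_Iic_sub_Iic hp.integrableOn hp.integrableOn, sub_add_cancel]
  rw [hsplit]
  exact (hpc.integral_hasStrictDerivAt 0 x).hasDerivAt.add_const _

theorem strictMono_integral_Iic (hpos : ∀ x, 0 < p x) (hp : Integrable p) :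
    StrictMono fun x => ∫ t in Set.Iic x, p t := fun a b hab => by
  rw [← sub_pos, intervalIntegral.integral_Iic_sub_Iic hp.integrableOn hp.integrableOn]
  exact intervalIntegral.intervalIntegral_pos_of_pos hp.intervalIntegrable hpos hab

theorem tendsto_integral_Iic_atTop (hp : Integrable p) :
    Tendsto (fun x => ∫ t in Set.Iic x, p t) atTop (𝓝 (∫ t, p t)) :=
  (aecover_Iic tendsto_id).integral_tendsto_of_countably_generated hp

theorem tendsto_integral_Iic_atBot (hp : Integrable p) :
    Tendsto (fun x => ∫ t in Set.Iic x, p t) atBot (𝓝 0) := by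
  have hIoi : Tendsto (fun x => ∫ t in Set.Ioi x, p t) atBot (𝓝 (∫ t, p t)) :=
    (aecover_Ioi tendsto_id).integral_tendsto_of_countably_generated hp
  rw [← sub_self (∫ t, p t)]
  refine (hIoi.const_sub _).congr fun x => ?_
  rw [← Set.compl_Iic, ← integral_add_compl measurableSet_Iic hp, add_sub_cancel_right]

theorem range_integral_Iic (hpc : Continuous p) (hpos : ∀ x, 0 < p x) (hp : Integrable p) :
    Set.range (fun x => ∫ t in Set.Iic x, p t) = Set.Ioo 0 (∫ t, p t) := by
  have hmono := strictMono_integral_Iic hpos hp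
  have hcont : Continuous fun x => ∫ t in Set.Iic x, p t :=
    continuous_iff_continuousAt.2 fun x => (hasDerivAt_integral_Iic hpc hp x).continuousAt
  apply Set.Subset.antisymm
  · rintro _ ⟨x, rfl⟩
    exact ⟨(hmono.monotone.le_of_tendsto (tendsto_integral_Iic_atBot hp) (x - 1)).trans_lt
        (hmono (sub_one_lt x)),
      (hmono (lt_add_one x)).trans_le
        (hmono.monotone.ge_of_tendsto (tendsto_integral_Iic_atTop hp) (x + 1))⟩
  · rintro y ⟨hy0, hy1⟩
    exact mem_range_of_exists_le_of_exists_ge hcont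
      ((tendsto_integral_Iic_atBot hp).eventually (ge_mem_nhds hy0)).exists
      ((tendsto_integral_Iic_atTop hp).eventually (le_mem_nhds hy1)).exists

theorem isOpenEmbedding_integral_Iic (hpc : Continuous p) (hpos : ∀ x, 0 < p x)
    (hp : Integrable p) : IsOpenEmbedding fun x => ∫ t in Set.Iic x, p t := by
  have hrange := range_integral_Iic hpc hpos hp
  exact ⟨(strictMono_integral_Iic hpos hp).isEmbedding_of_ordConnected
    (hrange ▸ Set.ordConnected_Ioo), hrange ▸ isOpen_Ioo⟩

theorem exists_monotone_transport (hpc : Continuous p) (hppos : ∀ x, 0 < p x) (hp : Integrable p)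
    (hqc : Continuous q) (hqpos : ∀ x, 0 < q x) (hq : Integrable q)
    (hpq : ∫ t, p t = ∫ t, q t) : ∃ T : ℝ → ℝ, ∀ x, HasDerivAt T (p x / q (T x)) x := by
  let e := (isOpenEmbedding_integral_Iic hqc hqpos hq).toOpenPartialHomeomorph
  refine ⟨fun x => e.symm (∫ t in Set.Iic x, p t), fun x => ?_⟩
  have hmem : ∫ t in Set.Iic x, p t ∈ e.target := by
    have hx : ∫ t in Set.Iic x, p t ∈ Set.range fun x => ∫ t in Set.Iic x, q t := by
      rw [range_integral_Iic hqc hqpos hq, ← hpq, ← range_integral_Iic hpc hppos hp]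
      exact ⟨x, rfl⟩
    simpa [e] using hx
  rw [div_eq_inv_mul]
  exact (e.hasDerivAt_symm hmem (hqpos _).ne' (hasDerivAt_integral_Iic hqc hq _)).comp x
    (hasDerivAt_integral_Iic hpc hp x)

end Transport

section BoundaryTerms

variable {g g' : ℝ → ℝ}

theorem frequently_atTop_neg_lt_of_hasDerivAt (hg : ∀ x, HasDerivAt g (g' x) x)
    (hbdd : BddBelow (Set.range g)) {ε : ℝ} (hε : 0 < ε) : ∃ᶠ x in atTop, -ε < g' x := by
  by_contra hcon
  obtain ⟨B, hB⟩ := eventually_atTop.1 (not_frequently.1 hcon)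
  obtain ⟨m, hm⟩ := hbdd
  have hdrop : ∀ b ≥ B, g b - g B ≤ -ε * (b - B) := fun b hb =>
    (convex_Ici B).image_sub_le_mul_sub_of_deriv_le
      (fun x _ => (hg x).continuousAt.continuousWithinAt)
      (fun x _ => (hg x).differentiableAt.differentiableWithinAt)
      (fun x hx => by
        rw [(hg x).deriv]
        exact not_lt.1 (hB x (interior_subset hx)))
      B Set.self_mem_Ici b hb hb
  have hlim : Tendsto (fun b => g B + -ε * (b - B)) atTop atBot :=
    tendsto_atBot_add_const_left _ _
      ((tendsto_atTop_add_const_right _ (-B) tendsto_id).const_mul_atTop_of_neg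
        (neg_neg_of_pos hε))
  obtain ⟨b, hbm, hbB⟩ := ((hlim.eventually_lt_atBot m).and (eventually_ge_atTop B)).exists
  linarith [hdrop b hbB, hm (Set.mem_range_self b)]

theorem frequently_atBot_lt_of_hasDerivAt (hg : ∀ x, HasDerivAt g (g' x) x)
    (hbdd : BddBelow (Set.range g)) {ε : ℝ} (hε : 0 < ε) : ∃ᶠ x in atBot, g' x < ε := by
  have hneg : ∀ x, HasDerivAt (fun x => g (-x)) (-g' (-x)) x := fun x => by
    simpa [Function.comp_def] using (hg (-x)).scomp x (hasDerivAt_neg x)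
  refine tendsto_neg_atTop_atBot.frequently
    ((frequently_atTop_neg_lt_of_hasDerivAt hneg (hbdd.mono ?_) hε).mono fun x => neg_lt_neg_iff.1)
  exact Set.range_comp_subset_range _ g

theorem integral_nonpos_of_intervalIntegral_le_sub {H : ℝ → ℝ} (hH : Integrable H)
    (hg : ∀ x, HasDerivAt g (g' x) x) (hbdd : BddBelow (Set.range g))
    (hle : ∀ a ≤ 0, ∀ b ≥ 0, ∫ x in a..b, H x ≤ g' a - g' b) : ∫ x, H x ≤ 0 := by
  have hIoi : ∀ a ≤ 0, ∫ x in Set.Ioi a, H x ≤ g' a := fun a ha =>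
    le_of_forall_pos_le_add fun ε hε => le_of_tendsto_of_frequently
      (intervalIntegral_tendsto_integral_Ioi a hH.integrableOn tendsto_id)
      (((frequently_atTop_neg_lt_of_hasDerivAt hg hbdd hε).and_eventually
        (eventually_ge_atTop 0)).mono fun b hb => (hle a ha b hb.2).trans (by linarith [hb.1]))
  refine le_of_forall_pos_le_add fun ε hε => le_of_tendsto_of_frequently
    ((aecover_Ioi tendsto_id).integral_tendsto_of_countably_generated hH)
    (((frequently_atBot_lt_of_hasDerivAt hg hbdd hε).and_eventually
      (eventually_le_atBot 0)).mono fun a ha => (hIoi a ha.2).trans (by linarith [ha.1]))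

end BoundaryTerms

section Entropy

variable {X : Type*} [MeasurableSpace X]

/-- The entropy `Ent_μ(f) = ∫ f log (f / ∫ f dμ) dμ` of a positive function `f`, with the logarithm
of the quotient expanded. -/
noncomputable def entropy (μ : Measure X) (f : X → ℝ) : ℝ :=
  ∫ x, f x * log (f x) ∂μ - (∫ x, f x ∂μ) * log (∫ x, f x ∂μ)

/-- `f` is a positive function whose entropy with respect to `μ` is defined by convergent
integrals: both `f` and `f log f` are `μ`-integrable. -/
structure HasFiniteEntropy (f : X → ℝ) (μ : Measure X) : Prop where
  pos : ∀ x, 0 < f x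
  integrable : Integrable f μ
  integrable_mul_log : Integrable (fun x => f x * log (f x)) μ

namespace HasFiniteEntropy

variable {μ : Measure X} {f h : X → ℝ}

theorem integral_pos [NeZero μ] (hf : HasFiniteEntropy f μ) : 0 < ∫ x, f x ∂μ :=
  integral_pos_of_ae_pos hf.integrable (ae_of_all _ hf.pos)

theorem mul_log_div_integral_eq [NeZero μ] (hf : HasFiniteEntropy f μ) (x : X) :
    f x * log (f x / ∫ y, f y ∂μ) = f x * log (f x) - f x * log (∫ y, f y ∂μ) := by
  rw [log_div (hf.pos x).ne' hf.integral_pos.ne', mul_sub]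

theorem integrable_mul_log_div_integral [NeZero μ] (hf : HasFiniteEntropy f μ) :
    Integrable (fun x => f x * log (f x / ∫ y, f y ∂μ)) μ := by
  simp only [hf.mul_log_div_integral_eq]
  exact hf.integrable_mul_log.sub (hf.integrable.mul_const _)

theorem integral_mul_log_div_integral [NeZero μ] (hf : HasFiniteEntropy f μ) :
    ∫ x, f x * log (f x / ∫ y, f y ∂μ) ∂μ = entropy μ f := by
  simp only [hf.mul_log_div_integral_eq]
  rw [integral_sub hf.integrable_mul_log (hf.integrable.mul_const _), integral_mul_const, entropy]

theorem integral_mul_log_sub_le_entropy [NeZero μ] (hf : HasFiniteEntropy f μ)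
    (hh : Integrable h μ) (hpos : ∀ᵐ x ∂μ, 0 < h x)
    (hfh : Integrable (fun x => f x * log (h x)) μ) :
    ∫ x, f x * log (h x) ∂μ - (∫ x, f x ∂μ) * log (∫ x, h x ∂μ) ≤ entropy μ f := by
  have hm := hf.integral_pos
  have hM := integral_pos_of_ae_pos hh hpos
  rw [entropy, sub_le_sub_iff]
  set m := ∫ x, f x ∂μ with hmdef
  set M := ∫ x, h x ∂μ with hMdef
  have hle : ∀ᵐ x ∂μ, f x * log (h x) + f x * log m + f x
      ≤ f x * log (f x) + f x * log M + h x * (m / M) := by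
    filter_upwards [hpos] with x hhx
    have hfx := hf.pos x
    have hlog := log_le_sub_one_of_pos (show 0 < h x * m / (M * f x) by positivity)
    rw [log_div (by positivity) (by positivity), log_mul hhx.ne' hm.ne',
      log_mul hM.ne' hfx.ne'] at hlog
    have hmul := mul_le_mul_of_nonneg_left hlog hfx.le
    have hcancel : f x * (h x * m / (M * f x) - 1) = h x * (m / M) - f x := by field_simp
    linarith
  have hint := integral_mono_ae
    ((hfh.add (hf.integrable.mul_const _)).add hf.integrable)
    ((hf.integrable_mul_log.add (hf.integrable.mul_const _)).add (hh.mul_const _)) hle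
  rw [integral_add' (hfh.add (hf.integrable.mul_const _)) hf.integrable,
    integral_add' hfh (hf.integrable.mul_const _),
    integral_add' (hf.integrable_mul_log.add (hf.integrable.mul_const _)) (hh.mul_const _),
    integral_add' hf.integrable_mul_log (hf.integrable.mul_const _), integral_mul_const,
    integral_mul_const, integral_mul_const, ← hmdef, ← hMdef, mul_div_cancel₀ m hM.ne'] at hint
  linarith

theorem comp_measurePreserving {Y : Type*} [MeasurableSpace Y] {ν : Measure Y} {Φ : Y → X}
    (hf : HasFiniteEntropy f μ) (hΦ : MeasurePreserving Φ ν μ) :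
    HasFiniteEntropy (fun y => f (Φ y)) ν where
  pos y := hf.pos (Φ y)
  integrable := hΦ.integrable_comp_of_integrable hf.integrable
  integrable_mul_log := hΦ.integrable_comp_of_integrable hf.integrable_mul_log

theorem entropy_comp_measurePreserving {Y : Type*} [MeasurableSpace Y] {ν : Measure Y} {Φ : Y → X}
    (hf : HasFiniteEntropy f μ) (hΦ : MeasurePreserving Φ ν μ) :
    entropy ν (fun y => f (Φ y)) = entropy μ f := by
  rw [entropy, entropy, integral_comp_measurePreserving hΦ hf.integrable,
    integral_comp_measurePreserving hΦ hf.integrable_mul_log]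

end HasFiniteEntropy

end Entropy

section GaussianReal

local notation "φ" => gaussianPDFReal 0 1

theorem gaussianPDFReal_zero_one_pos (x : ℝ) : 0 < φ x :=
  gaussianPDFReal_pos 0 1 x one_ne_zero

theorem hasDerivAt_gaussianPDFReal_zero_one (x : ℝ) : HasDerivAt φ (-x * φ x) x := by
  have hexponent : HasDerivAt (fun x : ℝ => -(x - 0) ^ 2 / (2 * ((1 : NNReal) : ℝ))) (-x) x := by
    refine ((((hasDerivAt_id x).sub_const 0).pow 2).neg.div_const _).congr_deriv ?_
    simp
    ring
  rw [gaussianPDFReal_def]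
  exact (hexponent.exp.const_mul _).congr_deriv (by ring)

theorem continuous_gaussianPDFReal_zero_one : Continuous φ :=
  continuous_iff_continuousAt.2 fun x => (hasDerivAt_gaussianPDFReal_zero_one x).continuousAt

theorem log_gaussianPDFReal_zero_one_div (x y : ℝ) :
    log (φ x / φ y) = (y ^ 2 - x ^ 2) / 2 := by
  have hdiv : φ x / φ y = rexp ((y ^ 2 - x ^ 2) / 2) := by
    simp only [gaussianPDFReal_def, NNReal.coe_one, mul_one, sub_zero]
    rw [mul_div_mul_left _ _ (by positivity), ← exp_sub]
    ring_nf
  rw [hdiv, log_exp]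

theorem integrable_gaussianReal_zero_one_iff {g : ℝ → ℝ} :
    Integrable g (gaussianReal 0 1) ↔ Integrable fun x => g x * φ x := by
  rw [gaussianReal_of_var_ne_zero 0 one_ne_zero,
    integrable_withDensity_iff_integrable_smul' (measurable_gaussianPDF 0 1)
      (ae_of_all _ fun _ => gaussianPDF_lt_top)]
  simp only [toReal_gaussianPDF, smul_eq_mul, mul_comm]

theorem integral_gaussianReal_zero_one (g : ℝ → ℝ) :
    ∫ x, g x ∂(gaussianReal 0 1) = ∫ x, g x * φ x := by
  rw [integral_gaussianReal_eq_integral_smul one_ne_zero]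
  simp only [smul_eq_mul, mul_comm]

theorem exists_gaussian_transport {f : ℝ → ℝ} (hfc : Continuous f) (hpos : ∀ x, 0 < f x)
    (hf : Integrable f (gaussianReal 0 1)) :
    ∃ T : ℝ → ℝ, ∀ x,
      HasDerivAt T (f x * φ x / ((∫ y, f y ∂(gaussianReal 0 1)) * φ (T x))) x := by
  have hm := integral_pos_of_ae_pos hf (ae_of_all _ hpos)
  refine exists_monotone_transport (p := fun x => f x * φ x)
    (hfc.mul continuous_gaussianPDFReal_zero_one)
    (fun x => mul_pos (hpos x) (gaussianPDFReal_zero_one_pos x))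
    (integrable_gaussianReal_zero_one_iff.1 hf)
    (continuous_gaussianPDFReal_zero_one.const_mul _)
    (fun x => mul_pos hm (gaussianPDFReal_zero_one_pos x))
    ((integrable_gaussianPDFReal 0 1).const_mul _) ?_
  rw [integral_const_mul, integral_gaussianPDFReal_eq_one 0 one_ne_zero, mul_one,
    integral_gaussianReal_zero_one]

theorem mul_log_div_sub_le_of_transport {m x y t a b : ℝ} (ha : 0 < a) (hm : 0 < m)
    (ht : t = a * φ x / (m * φ y)) :
    a * log (a / m) - 1 / 2 * (b ^ 2 / a) ≤ (b - x * a) * (y - x) + a * (t - 1) := by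
  have hx := gaussianPDFReal_zero_one_pos x
  have hy := gaussianPDFReal_zero_one_pos y
  have htpos : 0 < t := by rw [ht]; positivity
  have hlog : log (a / m) = (x ^ 2 - y ^ 2) / 2 + log t := by
    have ham : a / m = t * (φ y / φ x) := by rw [ht]; field_simp
    rw [ham, log_mul htpos.ne' (div_pos hy hx).ne', log_gaussianPDFReal_zero_one_div, add_comm]
  have hlog_le : a * log (a / m) ≤ a * ((x ^ 2 - y ^ 2) / 2 + (t - 1)) := by
    rw [hlog]
    gcongr
    exact log_le_sub_one_of_pos htpos
  have hsquare : 0 ≤ 1 / 2 * ((b + a * (y - x)) ^ 2 / a) := by positivity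
  have hexpand : 1 / 2 * ((b + a * (y - x)) ^ 2 / a)
      = 1 / 2 * (b ^ 2 / a) + b * (y - x) + a * (y - x) ^ 2 / 2 := by
    field_simp
    ring
  linarith

variable {f f' T : ℝ → ℝ} {m : ℝ}

theorem intervalIntegral_logSobolev_le_of_transport (hf : ∀ x, HasDerivAt f (f' x) x)
    (hpos : ∀ x, 0 < f x) (hm : 0 < m)
    (hT : ∀ x, HasDerivAt T (f x * φ x / (m * φ (T x))) x)
    (hH : Integrable fun x => (f x * log (f x / m) - 1 / 2 * (f' x ^ 2 / f x)) * φ x)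
    {a b : ℝ} (hab : a ≤ b) :
    ∫ x in a..b, (f x * log (f x / m) - 1 / 2 * (f' x ^ 2 / f x)) * φ x
      ≤ f b * φ b * (T b - b) - f a * φ a * (T a - a) := by
  have hG : ∀ x, HasDerivAt (fun x => f x * φ x * (T x - x))
      (((f' x - x * f x) * (T x - x) + f x * (f x * φ x / (m * φ (T x)) - 1)) * φ x) x := fun x =>
    (((hf x).mul (hasDerivAt_gaussianPDFReal_zero_one x)).mul
      ((hT x).sub (hasDerivAt_id x))).congr_deriv (by
        simp only [Pi.mul_apply, Pi.sub_apply, id]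
        ring)
  exact intervalIntegral.integral_le_sub_of_hasDeriv_right_of_le hab
    (fun x _ => (hG x).continuousAt.continuousWithinAt) (fun x _ => (hG x).hasDerivWithinAt)
    hH.integrableOn fun x _ => mul_le_mul_of_nonneg_right
      (mul_log_div_sub_le_of_transport (hpos x) hm rfl) (gaussianPDFReal_zero_one_pos x).le

theorem integral_logSobolev_nonpos_of_transport (hf : ∀ x, HasDerivAt f (f' x) x)
    (hpos : ∀ x, 0 < f x) (hm : 0 < m)
    (hT : ∀ x, HasDerivAt T (f x * φ x / (m * φ (T x))) x)
    (hH : Integrable fun x => (f x * log (f x / m) - 1 / 2 * (f' x ^ 2 / f x)) * φ x) :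
    ∫ x, (f x * log (f x / m) - 1 / 2 * (f' x ^ 2 / f x)) * φ x ≤ 0 := by
  have hφT : ∀ x, HasDerivAt (fun x => m * φ (T x)) (-(f x * φ x * T x)) x := fun x => by
    have := (gaussianPDFReal_zero_one_pos (T x)).ne'
    refine (((hasDerivAt_gaussianPDFReal_zero_one (T x)).comp x (hT x)).const_mul m).congr_deriv ?_
    field_simp
  have hfφ : ∀ x, 0 ≤ f x * φ x := fun x =>
    (mul_pos (hpos x) (gaussianPDFReal_zero_one_pos x)).le
  refine integral_nonpos_of_intervalIntegral_le_sub hH hφT ⟨0, ?_⟩ fun a ha b hb => ?_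
  · rintro _ ⟨x, rfl⟩
    exact (mul_pos hm (gaussianPDFReal_zero_one_pos _)).le
  · have hbound := intervalIntegral_logSobolev_le_of_transport hf hpos hm hT hH (ha.trans hb)
    have hfφa : f a * φ a * a ≤ 0 := mul_nonpos_of_nonneg_of_nonpos (hfφ a) ha
    have hfφb : 0 ≤ f b * φ b * b := mul_nonneg (hfφ b) hb
    linarith

theorem entropy_gaussianReal_le (hf : ∀ x, HasDerivAt f (f' x) x)
    (hent : HasFiniteEntropy f (gaussianReal 0 1))
    (hfisher : Integrable (fun x => f' x ^ 2 / f x) (gaussianReal 0 1)) :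
    entropy (gaussianReal 0 1) f ≤ 1 / 2 * ∫ x, f' x ^ 2 / f x ∂(gaussianReal 0 1) := by
  have hfc : Continuous f := continuous_iff_continuousAt.2 fun x => (hf x).continuousAt
  obtain ⟨T, hT⟩ := exists_gaussian_transport hfc hent.pos hent.integrable
  have hlog := hent.integrable_mul_log_div_integral
  have hhalf := hfisher.const_mul (1 / 2)
  rw [← sub_nonpos, ← hent.integral_mul_log_div_integral, ← integral_const_mul,
    ← integral_sub hlog hhalf, integral_gaussianReal_zero_one]
  exact integral_logSobolev_nonpos_of_transport hf hent.pos hent.integral_pos hT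
    (integrable_gaussianReal_zero_one_iff.1 (hlog.sub hhalf))

end GaussianReal

section EntropyProd

variable {X Y : Type*} [MeasurableSpace X] [MeasurableSpace Y] {μ : Measure X} {ν : Measure Y}
  {f : X × Y → ℝ}

namespace HasFiniteEntropy

theorem swap [SFinite μ] [SFinite ν] (hf : HasFiniteEntropy f (μ.prod ν)) :
    HasFiniteEntropy (fun z : Y × X => f z.swap) (ν.prod μ) :=
  hf.comp_measurePreserving Measure.measurePreserving_swap

theorem prod_right_ae [SFinite μ] [SFinite ν] (hf : HasFiniteEntropy f (μ.prod ν)) :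
    ∀ᵐ x ∂μ, HasFiniteEntropy (fun y => f (x, y)) ν := by
  filter_upwards [hf.integrable.prod_right_ae, hf.integrable_mul_log.prod_right_ae]
    with x hx hxlog using ⟨fun y => hf.pos (x, y), hx, hxlog⟩

theorem prod_left_ae [SFinite μ] [SFinite ν] (hf : HasFiniteEntropy f (μ.prod ν)) :
    ∀ᵐ y ∂ν, HasFiniteEntropy (fun x => f (x, y)) μ :=
  hf.swap.prod_right_ae

variable [IsProbabilityMeasure ν]

theorem integrable_marginal_mul_log [IsFiniteMeasure μ] (hf : HasFiniteEntropy f (μ.prod ν)) :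
    Integrable (fun x => (∫ y, f (x, y) ∂ν) * log (∫ y, f (x, y) ∂ν)) μ := by
  refine (hf.integrable_mul_log.integral_prod_left.abs.add (integrable_const 1)).mono'
    (continuous_mul_log.comp_aestronglyMeasurable
      hf.integrable.integral_prod_left.aestronglyMeasurable) ?_
  filter_upwards [hf.prod_right_ae] with x hx
  have hjensen := convexOn_mul_log.map_integral_le continuous_mul_log.continuousOn isClosed_Ici
    (ae_of_all _ fun y => (hx.pos y).le) hx.integrable hx.integrable_mul_log
  have hm := hx.integral_pos
  have hlower := mul_le_mul_of_nonneg_left (one_sub_inv_le_log_of_pos hm) hm.le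
  rw [mul_sub, mul_inv_cancel₀ hm.ne', mul_one] at hlower
  simp only [Pi.add_apply, norm_eq_abs, abs_le]
  constructor
  · linarith [abs_nonneg (∫ y, f (x, y) * log (f (x, y)) ∂ν)]
  · linarith [le_abs_self (∫ y, f (x, y) * log (f (x, y)) ∂ν)]

theorem integrable_mul_log_marginal [IsFiniteMeasure μ] (hf : HasFiniteEntropy f (μ.prod ν)) :
    Integrable (fun z => f z * log (∫ y, f (z.1, y) ∂ν)) (μ.prod ν) := by
  have hlog : AEStronglyMeasurable (fun x => log (∫ y, f (x, y) ∂ν)) μ :=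
    (measurable_log.comp_aemeasurable
      hf.integrable.integral_prod_left.aemeasurable).aestronglyMeasurable
  have hmeas : AEStronglyMeasurable (fun z => f z * log (∫ y, f (z.1, y) ∂ν)) (μ.prod ν) :=
    hf.integrable.aestronglyMeasurable.mul hlog.comp_fst
  refine (integrable_prod_iff hmeas).2 ⟨hf.prod_right_ae.mono fun x hx =>
    hx.integrable.mul_const (log (∫ y, f (x, y) ∂ν)),
    hf.integrable_marginal_mul_log.abs.congr (ae_of_all _ fun x => ?_)⟩
  have hm : 0 ≤ ∫ y, f (x, y) ∂ν := integral_nonneg fun y => (hf.pos (x, y)).le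
  simp only [norm_mul, norm_eq_abs, abs_of_pos (hf.pos _), abs_mul, abs_of_nonneg hm]
  rw [integral_mul_const]

theorem integrable_entropy_right [IsFiniteMeasure μ] (hf : HasFiniteEntropy f (μ.prod ν)) :
    Integrable (fun x => entropy ν fun y => f (x, y)) μ :=
  hf.integrable_mul_log.integral_prod_left.sub hf.integrable_marginal_mul_log

theorem entropy_prod_eq [IsFiniteMeasure μ] (hf : HasFiniteEntropy f (μ.prod ν)) :
    entropy (μ.prod ν) f
      = ∫ x, entropy ν (fun y => f (x, y)) ∂μ + entropy μ fun x => ∫ y, f (x, y) ∂ν := by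
  simp only [entropy]
  rw [integral_sub hf.integrable_mul_log.integral_prod_left hf.integrable_marginal_mul_log,
    ← integral_prod _ hf.integrable_mul_log, ← integral_prod _ hf.integrable]
  ring

theorem entropy_marginal_le [IsProbabilityMeasure μ] (hf : HasFiniteEntropy f (μ.prod ν)) :
    entropy μ (fun x => ∫ y, f (x, y) ∂ν) ≤ ∫ y, entropy μ (fun x => f (x, y)) ∂ν := by
  have hmarg := hf.integrable.integral_prod_left
  have hmarg_pos : ∀ᵐ x ∂μ, 0 < ∫ y, f (x, y) ∂ν :=
    hf.prod_right_ae.mono fun _ hx => hx.integral_pos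
  have hlog := hf.integrable_mul_log_marginal
  have hfiber : ∀ᵐ y ∂ν, ∫ x, f (x, y) * log (∫ y', f (x, y') ∂ν) ∂μ
      - (∫ x, f (x, y) ∂μ) * log (∫ x, ∫ y', f (x, y') ∂ν ∂μ)
      ≤ entropy μ fun x => f (x, y) := by
    filter_upwards [hf.prod_left_ae, hlog.prod_left_ae] with y hy hylog
    exact hy.integral_mul_log_sub_le_entropy hmarg hmarg_pos hylog
  calc entropy μ (fun x => ∫ y, f (x, y) ∂ν)
      = ∫ y, (∫ x, f (x, y) * log (∫ y', f (x, y') ∂ν) ∂μ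
          - (∫ x, f (x, y) ∂μ) * log (∫ x, ∫ y', f (x, y') ∂ν ∂μ)) ∂ν := by
        rw [integral_sub hlog.integral_prod_right
            (hf.integrable.integral_prod_right.mul_const _), integral_mul_const,
          ← integral_prod_symm _ hlog, integral_prod _ hlog, ← integral_prod_symm _ hf.integrable,
          ← integral_prod _ hf.integrable, entropy, ← integral_prod _ hf.integrable]
        simp only [integral_mul_const]
    _ ≤ ∫ y, entropy μ (fun x => f (x, y)) ∂ν :=
        integral_mono_ae (hlog.integral_prod_right.sub
          (hf.integrable.integral_prod_right.mul_const _)) hf.swap.integrable_entropy_right hfiber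

theorem entropy_prod_le [IsProbabilityMeasure μ] (hf : HasFiniteEntropy f (μ.prod ν)) :
    entropy (μ.prod ν) f ≤ ∫ x, entropy ν (fun y => f (x, y)) ∂μ
      + ∫ y, entropy μ (fun x => f (x, y)) ∂ν := by
  rw [hf.entropy_prod_eq]
  gcongr
  exact hf.entropy_marginal_le

end HasFiniteEntropy

end EntropyProd

section EntropyPi

theorem measurePreserving_update {ι : Type*} [Fintype ι] [DecidableEq ι] {X : ι → Type*}
    [∀ i, MeasurableSpace (X i)] (μ : ∀ i, Measure (X i)) [∀ i, IsProbabilityMeasure (μ i)]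
    (i : ι) :
    MeasurePreserving (fun z : (∀ j, X j) × X i => Function.update z.1 i z.2)
      ((Measure.pi μ).prod (μ i)) (Measure.pi μ) := by
  refine ⟨measurable_update', (Measure.pi_eq fun s hs => ?_).symm⟩
  have hpreimage : (fun z : (∀ j, X j) × X i => Function.update z.1 i z.2) ⁻¹' Set.univ.pi s
      = Set.univ.pi (Function.update s i Set.univ) ×ˢ s i := by
    ext z
    simp only [Set.mem_preimage, Set.mem_univ_pi, Set.mem_prod]
    grind
  have herase : ∀ j ∈ Finset.univ.erase i, μ j (Function.update s i Set.univ j) = μ j (s j) :=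
    fun j hj => by rw [Function.update_of_ne (Finset.ne_of_mem_erase hj)]
  rw [Measure.map_apply measurable_update' (.univ_pi hs), hpreimage, Measure.prod_prod,
    Measure.pi_pi, ← Finset.prod_erase_mul _ _ (Finset.mem_univ i), Finset.prod_congr rfl herase,
    Function.update_self, measure_univ, mul_one, Finset.prod_erase_mul _ _ (Finset.mem_univ i)]

theorem integrable_entropy_update {ι : Type*} [Fintype ι] [DecidableEq ι] {X : ι → Type*}
    [∀ i, MeasurableSpace (X i)] {μ : ∀ i, Measure (X i)} [∀ i, IsProbabilityMeasure (μ i)]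
    {f : (∀ i, X i) → ℝ} (hf : HasFiniteEntropy f (Measure.pi μ)) (i : ι) :
    Integrable (fun x => entropy (μ i) fun s => f (Function.update x i s)) (Measure.pi μ) :=
  (hf.comp_measurePreserving (measurePreserving_update μ i)).integrable_entropy_right

theorem measurePreserving_finCons {n : ℕ} {X : Fin (n + 1) → Type*}
    [∀ i, MeasurableSpace (X i)] (μ : ∀ i, Measure (X i)) [∀ i, SigmaFinite (μ i)] :
    MeasurePreserving (fun z : X 0 × (∀ j : Fin n, X j.succ) => (Fin.cons z.1 z.2 : ∀ i, X i))
      ((μ 0).prod (Measure.pi fun j : Fin n => μ j.succ)) (Measure.pi μ) := by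
  have hcons : (fun z : X 0 × (∀ j : Fin n, X j.succ) => (Fin.cons z.1 z.2 : ∀ i, X i))
      = (MeasurableEquiv.piFinSuccAbove X 0).symm :=
    funext fun z => (Fin.insertNth_zero z.1 z.2).symm
  rw [hcons]
  exact (measurePreserving_piFinSuccAbove μ 0).symm

theorem entropy_pi_le {n : ℕ} {X : Fin n → Type*} [∀ i, MeasurableSpace (X i)]
    {μ : ∀ i, Measure (X i)} [∀ i, IsProbabilityMeasure (μ i)] {f : (∀ i, X i) → ℝ}
    (hf : HasFiniteEntropy f (Measure.pi μ)) :
    entropy (Measure.pi μ) f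
      ≤ ∑ i, ∫ x, entropy (μ i) (fun s => f (Function.update x i s)) ∂(Measure.pi μ) := by
  induction n with
  | zero => simp [entropy, integral_unique]
  | succ n ih =>
    have hcons := measurePreserving_finCons μ
    have hfcons := hf.comp_measurePreserving hcons
    have hint : ∀ i, Integrable (fun z : X 0 × (∀ j : Fin n, X j.succ) =>
        entropy (μ i) fun s => f (Function.update (Fin.cons z.1 z.2) i s))
        ((μ 0).prod (Measure.pi fun j : Fin n => μ j.succ)) := fun i =>
      hcons.integrable_comp_of_integrable (integrable_entropy_update hf i)
    have hcoord : ∀ i, ∫ x, entropy (μ i) (fun s => f (Function.update x i s)) ∂(Measure.pi μ)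
        = ∫ z : X 0 × (∀ j : Fin n, X j.succ),
            entropy (μ i) (fun s => f (Function.update (Fin.cons z.1 z.2) i s))
          ∂((μ 0).prod (Measure.pi fun j : Fin n => μ j.succ)) := fun i =>
      (integral_comp_measurePreserving hcons (integrable_entropy_update hf i)).symm
    have hhead : ∫ x, entropy (μ 0) (fun s => f (Function.update x 0 s)) ∂(Measure.pi μ)
        = ∫ y, entropy (μ 0) (fun t => f (Fin.cons t y))
          ∂(Measure.pi fun j : Fin n => μ j.succ) := by
      rw [hcoord, integral_prod_symm _ (hint 0)]
      simp [Fin.update_cons_zero]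
    have htail : ∫ t, entropy (Measure.pi fun j : Fin n => μ j.succ)
          (fun y => f (Fin.cons t y)) ∂(μ 0)
        ≤ ∑ j : Fin n, ∫ x, entropy (μ j.succ) (fun s => f (Function.update x j.succ s))
          ∂(Measure.pi μ) := by
      simp only [hcoord, fun j : Fin n => integral_prod _ (hint j.succ)]
      rw [← integral_finsetSum _ fun j _ => (hint j.succ).integral_prod_left]
      refine integral_mono_ae hfcons.integrable_entropy_right
        (integrable_finsetSum _ fun j _ => (hint j.succ).integral_prod_left) ?_
      filter_upwards [hfcons.prod_right_ae] with t ht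
      simpa only [← Fin.cons_update] using ih ht
    rw [Fin.sum_univ_succ, hhead, ← hf.entropy_comp_measurePreserving hcons]
    linarith [hfcons.entropy_prod_le]

end EntropyPi

section StdGaussian

theorem entropy_pi_gaussianReal_le {n : ℕ} {f : (Fin n → ℝ) → ℝ} {f' : Fin n → (Fin n → ℝ) → ℝ}
    (hf : ∀ i x, HasDerivAt (fun s => f (Function.update x i s)) (f' i x) (x i))
    (hent : HasFiniteEntropy f (Measure.pi fun _ => gaussianReal 0 1))
    (hfisher : ∀ i, Integrable (fun x => f' i x ^ 2 / f x)
      (Measure.pi fun _ => gaussianReal 0 1)) :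
    entropy (Measure.pi fun _ => gaussianReal 0 1) f
      ≤ 1 / 2 * ∑ i, ∫ x, f' i x ^ 2 / f x ∂(Measure.pi fun _ => gaussianReal 0 1) := by
  rw [Finset.mul_sum]
  refine (entropy_pi_le hent).trans (Finset.sum_le_sum fun i _ => ?_)
  have hupdate := measurePreserving_update (fun _ : Fin n => gaussianReal 0 1) i
  have hfisher_update : Integrable (fun z : (Fin n → ℝ) × ℝ =>
      f' i (Function.update z.1 i z.2) ^ 2 / f (Function.update z.1 i z.2))
      ((Measure.pi fun _ => gaussianReal 0 1).prod (gaussianReal 0 1)) :=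
    hupdate.integrable_comp_of_integrable (hfisher i)
  rw [← integral_comp_measurePreserving hupdate (hfisher i), integral_prod _ hfisher_update,
    ← integral_const_mul]
  refine integral_mono_ae (integrable_entropy_update hent i)
    (hfisher_update.integral_prod_left.const_mul _) ?_
  filter_upwards [(hent.comp_measurePreserving hupdate).prod_right_ae,
    hfisher_update.prod_right_ae] with x hx hx_fisher
  exact entropy_gaussianReal_le (fun s => by simpa using hf i (Function.update x i s)) hx hx_fisher

variable {E : Type*} [NormedAddCommGroup E] [InnerProductSpace ℝ E] {f : E → ℝ}

theorem norm_gradient_sq_eq_sum [CompleteSpace E] {ι : Type*} [Fintype ι]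
    (b : OrthonormalBasis ι ℝ E) (x : E) :
    ‖gradient f x‖ ^ 2 = ∑ i, fderiv ℝ f x (b i) ^ 2 := by
  rw [gradient, LinearIsometryEquiv.norm_map, b.norm_dual]

variable [FiniteDimensional ℝ E] [MeasurableSpace E] [BorelSpace E]

theorem integrable_exp_neg_norm_sq_div_two : Integrable fun x : E => rexp (-‖x‖ ^ 2 / 2) := by
  have hexp : ∀ x : E, rexp (-‖x‖ ^ 2 / 2) = rexp (-(1 / 2) * ‖x‖ ^ 2) := fun x => by ring_nf
  simp only [hexp]
  refine .of_integral_ne_zero ?_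
  rw [GaussianFourier.integral_rexp_neg_mul_sq_norm one_half_pos]
  positivity

theorem integral_exp_neg_norm_sq_div_two_mul_cexp (t : E) :
    ∫ x : E, (rexp (-‖x‖ ^ 2 / 2) : ℂ) * Complex.exp (inner ℝ x t * Complex.I)
      = ((2 * π) ^ ((Module.finrank ℝ E : ℝ) / 2) : ℝ) * Complex.exp (-‖t‖ ^ 2 / 2) := by
  have hexp : ∀ x : E, (rexp (-‖x‖ ^ 2 / 2) : ℂ) * Complex.exp (inner ℝ x t * Complex.I)
      = Complex.exp (-(1 / 2) * ‖x‖ ^ 2 + Complex.I * inner ℝ t x) := fun x => by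
    rw [real_inner_comm, Complex.exp_add]
    push_cast
    ring_nf
  simp only [hexp]
  rw [GaussianFourier.integral_cexp_neg_mul_sq_norm_add (by simp),
    Complex.ofReal_cpow (by positivity)]
  push_cast
  simp only [Complex.I_sq]
  ring_nf

theorem stdGaussian_eq_withDensity :
    stdGaussian E = volume.withDensity fun x : E =>
      ENNReal.ofReal ((2 * π) ^ (-(Module.finrank ℝ E : ℝ) / 2) * rexp (-‖x‖ ^ 2 / 2)) := by
  have hint := (integrable_exp_neg_norm_sq_div_two (E := E)).const_mul
    ((2 * π) ^ (-(Module.finrank ℝ E : ℝ) / 2))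
  have hfinite := isFiniteMeasure_withDensity_ofReal hint.hasFiniteIntegral
  refine Measure.ext_of_charFun (funext fun t => ?_)
  rw [charFun_stdGaussian, charFun_apply, integral_withDensity_eq_integral_toReal_smul₀
    hint.aemeasurable.ennreal_ofReal (by simp)]
  have htoReal : ∀ x : E, (ENNReal.ofReal
      ((2 * π) ^ (-(Module.finrank ℝ E : ℝ) / 2) * rexp (-‖x‖ ^ 2 / 2))).toReal
      = (2 * π) ^ (-(Module.finrank ℝ E : ℝ) / 2) * rexp (-‖x‖ ^ 2 / 2) := fun x =>
    ENNReal.toReal_ofReal (by positivity)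
  simp only [htoReal, Complex.real_smul, Complex.ofReal_mul, mul_assoc]
  rw [integral_const_mul, integral_exp_neg_norm_sq_div_two_mul_cexp, ← mul_assoc,
    ← Complex.ofReal_mul, ← rpow_add (by positivity), ← add_div, neg_add_cancel, zero_div,
    rpow_zero, Complex.ofReal_one, one_mul]

theorem gaussian_eq_stdGaussian (n : ℕ) : gaussian n = stdGaussian (EuclideanSpace ℝ (Fin n)) := by
  rw [stdGaussian_eq_withDensity, finrank_euclideanSpace_fin, gaussian]

theorem entropy_stdGaussian_le (hf : Differentiable ℝ f) (hent : HasFiniteEntropy f (stdGaussian E))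
    (hfisher : Integrable (fun x => ‖gradient f x‖ ^ 2 / f x) (stdGaussian E)) :
    entropy (stdGaussian E) f ≤ 1 / 2 * ∫ x, ‖gradient f x‖ ^ 2 / f x ∂(stdGaussian E) := by
  let b := stdOrthonormalBasis ℝ E
  let Φ := (Fintype.linearCombination ℝ b).toContinuousLinearMap
  have hΦ : MeasurePreserving Φ (Measure.pi fun _ => gaussianReal 0 1) (stdGaussian E) :=
    ⟨Φ.measurable, rfl⟩
  have hpartial : ∀ i x, HasDerivAt (fun s => f (Φ (Function.update x i s)))
      (fderiv ℝ f (Φ x) (b i)) (x i) := fun i x => by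
    have hfΦ := ((hf (Φ (Function.update x i (x i)))).hasFDerivAt.comp (Function.update x i (x i))
      Φ.hasFDerivAt).comp_hasDerivAt (x i) (hasDerivAt_update x i (x i))
    simpa [Φ, Function.comp_def] using hfΦ
  have hfisher_i : ∀ i, Integrable (fun x => fderiv ℝ f x (b i) ^ 2 / f x) (stdGaussian E) :=
    fun i => by
      have hmeas : Measurable fun x => fderiv ℝ f x (b i) ^ 2 / f x :=
        ((measurable_fderiv_apply_const ℝ f (b i)).pow_const 2).div hf.continuous.measurable
      refine hfisher.mono' hmeas.aestronglyMeasurable (ae_of_all _ fun x => ?_)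
      rw [norm_of_nonneg (div_nonneg (sq_nonneg _) (hent.pos x).le),
        norm_gradient_sq_eq_sum b]
      gcongr
      · exact (hent.pos x).le
      · exact Finset.single_le_sum (f := fun i => fderiv ℝ f x (b i) ^ 2) (fun _ _ => sq_nonneg _)
          (Finset.mem_univ i)
  calc entropy (stdGaussian E) f
      = entropy (Measure.pi fun _ => gaussianReal 0 1) (fun x => f (Φ x)) :=
        (hent.entropy_comp_measurePreserving hΦ).symm
    _ ≤ 1 / 2 * ∑ i, ∫ x, fderiv ℝ f (Φ x) (b i) ^ 2 / f (Φ x)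
          ∂(Measure.pi fun _ => gaussianReal 0 1) :=
        entropy_pi_gaussianReal_le hpartial (hent.comp_measurePreserving hΦ) fun i =>
          hΦ.integrable_comp_of_integrable (hfisher_i i)
    _ = 1 / 2 * ∑ i, ∫ x, fderiv ℝ f x (b i) ^ 2 / f x ∂(stdGaussian E) := by
        simp only [fun i => integral_comp_measurePreserving hΦ (hfisher_i i)]
    _ = 1 / 2 * ∫ x, ‖gradient f x‖ ^ 2 / f x ∂(stdGaussian E) := by
        rw [← integral_finsetSum _ fun i _ => hfisher_i i]
        simp only [← Finset.sum_div, norm_gradient_sq_eq_sum b]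

theorem gaussian_logSobolev_general (hf : Differentiable ℝ f) (hpos : ∀ x, 0 < f x)
    (hi1 : Integrable f (stdGaussian E))
    (hi2 : Integrable (fun x => f x * log (f x)) (stdGaussian E))
    (hi3 : Integrable (fun x => ‖gradient f x‖ ^ 2 / f x) (stdGaussian E)) :
    ∫ x, f x * log (f x / ∫ y, f y ∂(stdGaussian E)) ∂(stdGaussian E)
      ≤ 1 / 2 * ∫ x, ‖gradient f x‖ ^ 2 / f x ∂(stdGaussian E) := by
  have hent : HasFiniteEntropy f (stdGaussian E) := ⟨hpos, hi1, hi2⟩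
  rw [hent.integral_mul_log_div_integral]
  exact entropy_stdGaussian_le hf hent hi3

end StdGaussian

theorem gaussian_logSobolev (n : ℕ) (f : EuclideanSpace ℝ (Fin n) → ℝ)
    (hf : ContDiff ℝ (⊤ : ℕ∞) f) (hpos : ∀ x, 0 < f x)
    (hi1 : Integrable f (gaussian n))
    (hi2 : Integrable (fun x => f x * Real.log (f x)) (gaussian n))
    (hi3 : Integrable (fun x => ‖gradient f x‖ ^ 2 / f x) (gaussian n)) :
    ∫ x, f x * Real.log (f x / ∫ y, f y ∂(gaussian n)) ∂(gaussian n)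
      ≤ (1 / 2) * ∫ x, ‖gradient f x‖ ^ 2 / f x ∂(gaussian n) := by
  rw [gaussian_eq_stdGaussian] at *
  exact gaussian_logSobolev_general (hf.differentiable (by simp)) hpos hi1 hi2 hi3
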